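/- arXiv:1805.02018 — 3 statements merged into one kernel-verified Lean document; each statement's English description precedes it below -/
import Mathlib

section
/- Let X be a complex vector space and 𝔔 a Hermitian form on X. Assume X = U + W for subspaces U, W with 𝔔(u,w) = 0 for all u ∈ U and w ∈ W, and assume m⁻(𝔔|_U) and m⁻(𝔔|_W) are finite. Then m⁻(𝔔) = m⁻(𝔔|_U) + m⁻(𝔔|_W). -/
open Module Submodule

noncomputable section

variable {X : Type*} [AddCommGroup X] [Module ℂ X]

/-- The `Q`-orthogonal complement (polar) `V^𝔔` of a subspace `V` with respect to a
sesquilinear form `Q` (conjugate-linear in the first variable). -/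
def qPolar (Q : X →ₗ⋆[ℂ] X →ₗ[ℂ] ℂ) (V : Submodule ℂ X) : Submodule ℂ X where
  carrier := {x | ∀ v ∈ V, Q x v = 0}
  add_mem' := by
    intro a b ha hb v hv
    simp only [map_add, LinearMap.add_apply, ha v hv, hb v hv, add_zero]
  zero_mem' := by
    intro v hv
    simp
  smul_mem' := by
    intro c x hx v hv
    simp only [LinearMap.map_smulₛₗ, LinearMap.smul_apply, hx v hv, smul_zero]

/-- The kernel of the form `Q`, i.e. `X^𝔔`. -/
def qKer (Q : X →ₗ⋆[ℂ] X →ₗ[ℂ] ℂ) : Submodule ℂ X := qPolar Q ⊤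

/-- The Morse index `m⁻(𝔔|_V)`: the supremum of dimensions of subspaces of `V`
on which `Q` is negative definite, as an extended natural number. -/
def negIdx (Q : X →ₗ⋆[ℂ] X →ₗ[ℂ] ℂ) (V : Submodule ℂ X) : ℕ∞ :=
  sSup {k : ℕ∞ | ∃ W : Submodule ℂ X, W ≤ V ∧ FiniteDimensional ℂ W ∧
    (∀ x ∈ W, x ≠ 0 → (Q x x).re < 0) ∧ k = (Module.finrank ℂ W : ℕ∞)}

/-!
The lower bound is the observation that an orthogonal sum of negative definite subspaces is direct
and negative definite. Applied to a negative definite `N ≤ V` of maximal dimension and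
`V ⊓ qPolar Q N`, it also shows that `Q` is nonnegative on `V ⊓ qPolar Q N`.

For the upper bound, suppose that both indices are finite and choose such `N ≤ U` and `M ≤ W`. By
the modular law, the part of `U ⊔ W` orthogonal to `N ⊔ M` is the orthogonal sum of
`U ⊓ qPolar Q N` and `W ⊓ qPolar Q M`, so `Q` is nonnegative on it. A negative definite subspace of
`U ⊔ W` therefore meets the polar of `N ⊔ M` only in `0`, and hence has dimension at most
`dim (N ⊔ M)`.
-/

section Polar

variable {Q : X →ₗ⋆[ℂ] X →ₗ[ℂ] ℂ} {U W N M : Submodule ℂ X}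

lemma qPolar_anti (h : N ≤ U) : qPolar Q U ≤ qPolar Q N :=
  fun _ hx n hn => hx n (h hn)

lemma qPolar_sup : qPolar Q (U ⊔ W) = qPolar Q U ⊓ qPolar Q W := by
  refine le_antisymm (le_inf (qPolar_anti le_sup_left) (qPolar_anti le_sup_right)) ?_
  rintro x ⟨hxU, hxW⟩ v hv
  obtain ⟨u, hu, w, hw, rfl⟩ := mem_sup.1 hv
  rw [map_add, hxU u hu, hxW w hw, add_zero]

lemma le_qPolar_symm (hQ : Q.IsRefl) (h : U ≤ qPolar Q W) : W ≤ qPolar Q U :=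
  fun w hw u hu => hQ u w (h hu w hw)

lemma sup_inf_qPolar_sup (hQ : Q.IsRefl) (horth : U ≤ qPolar Q W) (hN : N ≤ U) (hM : M ≤ W) :
    (U ⊔ W) ⊓ qPolar Q (N ⊔ M) = (U ⊓ qPolar Q N) ⊔ (W ⊓ qPolar Q M) := by
  have hWN : W ≤ qPolar Q N := (le_qPolar_symm hQ horth).trans (qPolar_anti hN)
  have hUM : U ⊓ qPolar Q N ≤ qPolar Q M := inf_le_left.trans (horth.trans (qPolar_anti hM))
  rw [qPolar_sup, ← inf_assoc, sup_comm U W, sup_inf_assoc_of_le U hWN, sup_comm W,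
    sup_inf_assoc_of_le W hUM]

lemma apply_self_add_of_le_qPolar (hQ : Q.IsRefl) (horth : U ≤ qPolar Q W) {u w : X}
    (hu : u ∈ U) (hw : w ∈ W) : Q (u + w) (u + w) = Q u u + Q w w := by
  simp [horth hu w hw, le_qPolar_symm hQ horth hw u hu]

lemma finrank_le_finrank_of_disjoint_qPolar {V : Submodule ℂ X} [FiniteDimensional ℂ N]
    (h : Disjoint V (qPolar Q N)) : finrank ℂ V ≤ finrank ℂ N := by
  let f : V →ₗ⋆[ℂ] Dual ℂ N := Q.domRestrict₁₂ V N
  have hf : Function.Injective f := by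
    refine (injective_iff_map_eq_zero f).2 fun v hv => Subtype.ext ?_
    exact disjoint_def.1 h v v.2 fun n hn => LinearMap.congr_fun hv ⟨n, hn⟩
  -- `f` is only conjugate-linear, so the linear comparison of ranks does not apply.
  have hrank : Module.rank ℂ V ≤ Module.rank ℂ (Dual ℂ N) :=
    rank_le_of_injective_injective (starRingEnd ℂ) f.toAddMonoidHom
      (fun _ => (map_eq_zero _).1) hf fun c v => by simp
  calc finrank ℂ V ≤ finrank ℂ (Dual ℂ N) :=
        Cardinal.toNat_le_toNat hrank (rank_lt_aleph0 ℂ (Dual ℂ N))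
    _ = finrank ℂ N := Subspace.dual_finrank_eq

end Polar

/-- `Q` is negative definite on `V`. The real part matters only for forms that are not Hermitian. -/
def IsNegDefOn (Q : X →ₗ⋆[ℂ] X →ₗ[ℂ] ℂ) (V : Submodule ℂ X) : Prop :=
  ∀ x ∈ V, x ≠ 0 → (Q x x).re < 0

namespace IsNegDefOn

variable {Q : X →ₗ⋆[ℂ] X →ₗ[ℂ] ℂ} {N M V : Submodule ℂ X}

lemma bot : IsNegDefOn Q ⊥ :=
  fun _ hx hx0 => absurd ((mem_bot ℂ).1 hx) hx0

lemma re_apply_self_nonpos (hN : IsNegDefOn Q N) {x : X} (hx : x ∈ N) : (Q x x).re ≤ 0 := by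
  obtain rfl | hx0 := eq_or_ne x 0
  · simp
  · exact (hN x hx hx0).le

lemma span_singleton {v : X} (hv : (Q v v).re < 0) : IsNegDefOn Q (ℂ ∙ v) := by
  intro x hx hx0
  obtain ⟨c, rfl⟩ := mem_span_singleton.1 hx
  have hc : c ≠ 0 := left_ne_zero_of_smul hx0
  have hcv : Q (c • v) (c • v) = (Complex.normSq c : ℂ) * Q v v := by
    simp [Complex.normSq_eq_conj_mul_self, mul_left_comm, mul_assoc]
  rw [hcv, Complex.re_ofReal_mul]
  exact mul_neg_of_pos_of_neg (Complex.normSq_pos.2 hc) hv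

lemma disjoint_of_nonneg (hN : IsNegDefOn Q N) (hV : ∀ x ∈ V, 0 ≤ (Q x x).re) :
    Disjoint N V := by
  refine disjoint_def.2 fun x hxN hxV => ?_
  by_contra hx0
  exact (hN x hxN hx0).not_ge (hV x hxV)

lemma disjoint_of_le_qPolar (hN : IsNegDefOn Q N) (horth : N ≤ qPolar Q M) : Disjoint N M := by
  refine disjoint_def.2 fun x hxN hxM => ?_
  by_contra hx0
  simpa [horth hxN x hxM] using hN x hxN hx0

lemma sup (hQ : Q.IsRefl) (hN : IsNegDefOn Q N) (hM : IsNegDefOn Q M)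
    (horth : N ≤ qPolar Q M) : IsNegDefOn Q (N ⊔ M) := by
  intro x hx hx0
  obtain ⟨n, hn, m, hm, rfl⟩ := mem_sup.1 hx
  rw [apply_self_add_of_le_qPolar hQ horth hn hm, Complex.add_re]
  obtain rfl | hn0 := eq_or_ne n 0
  · simpa using hM m hm (by simpa using hx0)
  · exact add_neg_of_neg_of_nonpos (hN n hn hn0) (hM.re_apply_self_nonpos hm)

lemma finrank_le_negIdx [FiniteDimensional ℂ N] (hN : IsNegDefOn Q N) (h : N ≤ V) :
    (finrank ℂ N : ℕ∞) ≤ negIdx Q V :=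
  le_sSup ⟨N, h, inferInstance, hN, rfl⟩

end IsNegDefOn

section MorseIndex

variable {Q : X →ₗ⋆[ℂ] X →ₗ[ℂ] ℂ} {U V W N : Submodule ℂ X}

lemma negIdx_le {a : ℕ∞}
    (h : ∀ N ≤ V, FiniteDimensional ℂ N → IsNegDefOn Q N → (finrank ℂ N : ℕ∞) ≤ a) :
    negIdx Q V ≤ a := by
  refine sSup_le ?_
  rintro _ ⟨N, hNV, hfin, hN, rfl⟩
  exact h N hNV hfin hN

lemma negIdx_mono (h : U ≤ V) : negIdx Q U ≤ negIdx Q V :=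
  negIdx_le fun _ hNU _ hN => hN.finrank_le_negIdx (hNU.trans h)

lemma exists_isNegDefOn_finrank_eq_negIdx (hV : negIdx Q V ≠ ⊤) :
    ∃ N ≤ V, FiniteDimensional ℂ N ∧ IsNegDefOn Q N ∧ (finrank ℂ N : ℕ∞) = negIdx Q V := by
  let dims : Set ℕ∞ := {k | ∃ N ≤ V, FiniteDimensional ℂ N ∧ IsNegDefOn Q N ∧
    k = (finrank ℂ N : ℕ∞)}
  have : Nonempty dims := ⟨_, ⊥, bot_le, inferInstance, .bot, rfl⟩
  obtain ⟨N, hNV, hfin, hN, hdim⟩ : negIdx Q V ∈ dims :=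
    ENat.sSup_mem_of_nonempty_of_lt_top hV.lt_top
  exact ⟨N, hNV, hfin, hN, hdim.symm⟩

lemma negIdx_eq_zero_iff : negIdx Q V = 0 ↔ ∀ x ∈ V, 0 ≤ (Q x x).re := by
  constructor
  · intro h x hx
    by_contra! hneg
    have hx0 : x ≠ 0 := by rintro rfl; simp at hneg
    have := (IsNegDefOn.span_singleton hneg).finrank_le_negIdx
      ((span_singleton_le_iff_mem x V).2 hx)
    simp [h, finrank_span_singleton hx0] at this
  · intro h
    refine nonpos_iff_eq_zero.1 (negIdx_le fun N hNV _ hN => ?_)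
    simp [disjoint_self.1 (hN.disjoint_of_nonneg fun x hx => h x (hNV hx))]

lemma negIdx_add_negIdx_le_negIdx_sup (hQ : Q.IsRefl) (horth : U ≤ qPolar Q W) :
    negIdx Q U + negIdx Q W ≤ negIdx Q (U ⊔ W) := by
  obtain hU | hU := eq_or_ne (negIdx Q U) ⊤
  · simpa [hU] using negIdx_mono (Q := Q) (le_sup_left : U ≤ U ⊔ W)
  obtain hW | hW := eq_or_ne (negIdx Q W) ⊤
  · simpa [hW] using negIdx_mono (Q := Q) (le_sup_right : W ≤ U ⊔ W)
  obtain ⟨N, hNU, _, hN, hNdim⟩ := exists_isNegDefOn_finrank_eq_negIdx hU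
  obtain ⟨M, hMW, _, hM, hMdim⟩ := exists_isNegDefOn_finrank_eq_negIdx hW
  have hNM : N ≤ qPolar Q M := hNU.trans (horth.trans (qPolar_anti hMW))
  have hdim : finrank ℂ ↥(N ⊔ M) = finrank ℂ N + finrank ℂ M := by
    rw [← finrank_sup_add_finrank_inf_eq, (hN.disjoint_of_le_qPolar hNM).eq_bot, finrank_bot,
      add_zero]
  rw [← hNdim, ← hMdim, ← Nat.cast_add, ← hdim]
  exact (hN.sup hQ hM hNM).finrank_le_negIdx (sup_le_sup hNU hMW)

lemma negIdx_sup_eq_zero (hQ : Q.IsRefl) (horth : U ≤ qPolar Q W) (hU : negIdx Q U = 0)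
    (hW : negIdx Q W = 0) : negIdx Q (U ⊔ W) = 0 := by
  refine negIdx_eq_zero_iff.2 fun x hx => ?_
  obtain ⟨u, hu, w, hw, rfl⟩ := mem_sup.1 hx
  rw [apply_self_add_of_le_qPolar hQ horth hu hw, Complex.add_re]
  exact add_nonneg (negIdx_eq_zero_iff.1 hU u hu) (negIdx_eq_zero_iff.1 hW w hw)

lemma exists_finrank_eq_negIdx_and_negIdx_inf_qPolar_eq_zero (hQ : Q.IsRefl)
    (hV : negIdx Q V ≠ ⊤) :
    ∃ N ≤ V, FiniteDimensional ℂ N ∧ (finrank ℂ N : ℕ∞) = negIdx Q V ∧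
      negIdx Q (V ⊓ qPolar Q N) = 0 := by
  obtain ⟨N, hNV, hfin, hN, hdim⟩ := exists_isNegDefOn_finrank_eq_negIdx hV
  refine ⟨N, hNV, hfin, hdim, ?_⟩
  have hadd : (finrank ℂ N : ℕ∞) + negIdx Q (V ⊓ qPolar Q N) ≤ finrank ℂ N + 0 :=
    calc (finrank ℂ N : ℕ∞) + negIdx Q (V ⊓ qPolar Q N)
        ≤ negIdx Q N + negIdx Q (V ⊓ qPolar Q N) := by
          gcongr; exact hN.finrank_le_negIdx le_rfl
      _ ≤ negIdx Q (N ⊔ V ⊓ qPolar Q N) :=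
          negIdx_add_negIdx_le_negIdx_sup hQ (le_qPolar_symm hQ inf_le_right)
      _ ≤ negIdx Q V := negIdx_mono (sup_le hNV inf_le_left)
      _ = finrank ℂ N + 0 := by rw [hdim, add_zero]
  exact nonpos_iff_eq_zero.1 ((ENat.add_le_add_iff_left (ENat.natCast_ne_top _)).1 hadd)

lemma negIdx_le_finrank_of_negIdx_inf_qPolar_eq_zero [FiniteDimensional ℂ N]
    (h : negIdx Q (V ⊓ qPolar Q N) = 0) : negIdx Q V ≤ finrank ℂ N := by
  refine negIdx_le fun A hAV _ hA => Nat.cast_le.2 ?_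
  have hdisj : Disjoint A (qPolar Q N) := by
    have := hA.disjoint_of_nonneg (negIdx_eq_zero_iff.1 h)
    rwa [disjoint_iff, ← inf_assoc, inf_eq_left.2 hAV, ← disjoint_iff] at this
  exact finrank_le_finrank_of_disjoint_qPolar hdisj

lemma negIdx_sup_le_negIdx_add_negIdx (hQ : Q.IsRefl) (horth : U ≤ qPolar Q W) :
    negIdx Q (U ⊔ W) ≤ negIdx Q U + negIdx Q W := by
  obtain hU | hU := eq_or_ne (negIdx Q U) ⊤
  · simp [hU]
  obtain hW | hW := eq_or_ne (negIdx Q W) ⊤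
  · simp [hW]
  obtain ⟨N, hNU, _, hNdim, hUN⟩ := exists_finrank_eq_negIdx_and_negIdx_inf_qPolar_eq_zero hQ hU
  obtain ⟨M, hMW, _, hMdim, hWM⟩ := exists_finrank_eq_negIdx_and_negIdx_inf_qPolar_eq_zero hQ hW
  have hpolar : negIdx Q ((U ⊔ W) ⊓ qPolar Q (N ⊔ M)) = 0 := by
    rw [sup_inf_qPolar_sup hQ horth hNU hMW]
    exact negIdx_sup_eq_zero hQ
      (inf_le_left.trans (horth.trans (qPolar_anti inf_le_left))) hUN hWM
  calc negIdx Q (U ⊔ W) ≤ finrank ℂ ↥(N ⊔ M) :=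
        negIdx_le_finrank_of_negIdx_inf_qPolar_eq_zero hpolar
    _ ≤ finrank ℂ N + finrank ℂ M := mod_cast finrank_add_le_finrank_add_finrank N M
    _ = negIdx Q U + negIdx Q W := by rw [hNdim, hMdim]

theorem morse_index_additive_general (hQ : Q.IsRefl) (horth : U ≤ qPolar Q W) :
    negIdx Q (U ⊔ W) = negIdx Q U + negIdx Q W :=
  (negIdx_sup_le_negIdx_add_negIdx hQ horth).antisymm (negIdx_add_negIdx_le_negIdx_sup hQ horth)

end MorseIndex

/-- If `X = U + W` and `𝔔(u,w) = 0` for all `u ∈ U`, `w ∈ W`, then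
`m⁻(𝔔) = m⁻(𝔔|_U) + m⁻(𝔔|_W)`. -/
theorem morse_index_additive
    (Q : X →ₗ⋆[ℂ] X →ₗ[ℂ] ℂ)
    (hQ : ∀ x y, (starRingEnd ℂ) (Q x y) = Q y x)
    (U W : Submodule ℂ X) (hUW : U ⊔ W = ⊤)
    (horth : ∀ u ∈ U, ∀ w ∈ W, Q u w = 0)
    (hU : negIdx Q U ≠ ⊤) (hW : negIdx Q W ≠ ⊤) :
    negIdx Q ⊤ = negIdx Q U + negIdx Q W := by
  rw [← hUW]
  exact morse_index_additive_general (LinearMap.IsSymm.isRefl ⟨hQ⟩) horth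
end
end

section
/- Let X be a complex vector space and 𝔔 a Hermitian form on X. (i) If V ⊆ X is a subspace with dim X/V < ∞, then dim(V^𝔔/ker 𝔔) = dim(X/V^{𝔔𝔔}). (ii) If W ⊆ X is a finite-dimensional subspace, then dim(X/W^𝔔) = dim((W + ker 𝔔)/ker 𝔔). -/
open Module Submodule

noncomputable section

variable {X : Type*} [AddCommGroup X] [Module ℂ X]

/-!
A form `B`, linear in its second variable, sends a subspace `W` to a space `B(W)` of linear
functionals whose common kernel is `W^⊥`. The evaluation pairing between `X/W^⊥` and `B(W)` has
trivial kernel on both sides, so the two dimensions agree as soon as one is finite, and `B(W)` is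
`W` modulo `ker B`. For a Hermitian form, (ii) is this fact for `W` and (i) is this fact for `V^𝔔`.
-/

theorem lift_rank_map_mkQ_ker.{u, v} {R R₂ : Type*} {M : Type u} {M₂ : Type v} [Ring R] [Ring R₂]
    [AddCommGroup M] [Module R M] [AddCommGroup M₂] [Module R₂ M₂] {σ : R →+* R₂} {σ' : R₂ →+* R}
    [RingHomInvPair σ σ'] [RingHomInvPair σ' σ] (f : M →ₛₗ[σ] M₂) (p : Submodule R M) :
    Cardinal.lift.{v} (Module.rank R (p.map (LinearMap.ker f).mkQ)) =
      Cardinal.lift.{u} (Module.rank R₂ (p.map f)) := by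
  let g : (M ⧸ LinearMap.ker f) →ₛₗ[σ] M₂ := (LinearMap.ker f).liftQ f le_rfl
  have g_injective : Function.Injective g :=
    LinearMap.ker_eq_bot.mp (ker_liftQ_eq_bot _ f le_rfl le_rfl)
  have map_eq : (p.map (LinearMap.ker f).mkQ).map g = p.map f := by
    rw [← Submodule.map_comp, liftQ_mkQ]
  let e := equivMapOfInjective g g_injective (p.map (LinearMap.ker f).mkQ)
  rw [← map_eq]
  exact lift_rank_eq_of_equiv_equiv σ e.toAddEquiv (RingHomInvPair.toRingEquiv σ σ').bijective
    e.map_smulₛₗ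

theorem dualCoannihilator_map_eq_orthogonalBilin {R R₁ M M₁ : Type*} [CommSemiring R]
    [CommSemiring R₁] [AddCommMonoid M] [Module R M] [AddCommMonoid M₁] [Module R₁ M₁]
    {σ : R₁ →+* R} [RingHomSurjective σ] (B : M₁ →ₛₗ[σ] M →ₗ[R] R) (N : Submodule R₁ M₁) :
    dualCoannihilator (N.map B) = N.orthogonalBilin B := by
  ext x
  simp [mem_dualCoannihilator]

section Field

variable {K V : Type*} [Field K] [AddCommGroup V] [Module K V]

theorem toENat_rank_le_of_injective_dual {W : Type*} [AddCommGroup W] [Module K W]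
    (f : V →ₗ[K] Dual K W) (hf : Function.Injective f) :
    (Module.rank K V).toENat ≤ (Module.rank K W).toENat := by
  by_cases hW : FiniteDimensional K W
  · have : FiniteDimensional K V := Module.Finite.of_injective f hf
    have finrank_le : finrank K V ≤ finrank K W :=
      (LinearMap.finrank_le_finrank_of_injective hf).trans_eq Subspace.dual_finrank_eq
    simpa only [← finrank_eq_rank, Cardinal.toENat_nat, Nat.cast_le] using finrank_le
  · have rank_top : (Module.rank K W).toENat = ⊤ :=
      Cardinal.toENat_eq_top.mpr (not_lt.mp (mt Module.rank_lt_aleph0_iff.mp hW))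
    exact rank_top ▸ le_top

theorem toENat_rank_quotient_dualCoannihilator (Φ : Submodule K (Dual K V)) :
    (Module.rank K (V ⧸ Φ.dualCoannihilator)).toENat = (Module.rank K Φ).toENat :=
  -- Unification does not recover this instance from the additive monoid structure of `Φ`.
  letI : AddCommGroup Φ := inferInstance
  le_antisymm (toENat_rank_le_of_injective_dual _ Φ.quotDualCoannihilatorToDual_injective)
    (toENat_rank_le_of_injective_dual _ Φ.flip_quotDualCoannihilatorToDual_injective)

/-- Dimensions are compared in `ℕ∞`: an infinite-dimensional `W` may yield different infinite
cardinals on the two sides. -/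
theorem dim_qPolar_general {K₀ U : Type*} [Field K₀] [AddCommGroup U] [Module K₀ U]
    {σ : K₀ →+* K} {σ' : K →+* K₀} [RingHomInvPair σ σ'] [RingHomInvPair σ' σ]
    (B : U →ₛₗ[σ] V →ₗ[K] K) (W : Submodule K₀ U) :
    (Module.rank K (V ⧸ W.orthogonalBilin B)).toENat =
      (Module.rank K₀ (W.map (LinearMap.ker B).mkQ)).toENat := by
  rw [← dualCoannihilator_map_eq_orthogonalBilin, toENat_rank_quotient_dualCoannihilator]
  simpa only [Cardinal.toENat_lift] using
    (congrArg Cardinal.toENat (lift_rank_map_mkQ_ker B W)).symm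

end Field

theorem qPolar_eq_orthogonalBilin (Q : X →ₗ⋆[ℂ] X →ₗ[ℂ] ℂ)
    (hQ : ∀ x y, (starRingEnd ℂ) (Q x y) = Q y x) (V : Submodule ℂ X) :
    qPolar Q V = V.orthogonalBilin Q := by
  ext x
  refine forall₂_congr fun v _ => ?_
  rw [← hQ, map_eq_zero]

theorem qKer_eq_ker (Q : X →ₗ⋆[ℂ] X →ₗ[ℂ] ℂ) : qKer Q = LinearMap.ker Q := by
  ext x
  simp [qKer, qPolar, LinearMap.ext_iff]

theorem toENat_rank_quotient_qPolar (Q : X →ₗ⋆[ℂ] X →ₗ[ℂ] ℂ)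
    (hQ : ∀ x y, (starRingEnd ℂ) (Q x y) = Q y x) (W : Submodule ℂ X) :
    (Module.rank ℂ (X ⧸ qPolar Q W)).toENat = (Module.rank ℂ (W.map (qKer Q).mkQ)).toENat := by
  rw [qPolar_eq_orthogonalBilin Q hQ, qKer_eq_ker]
  exact dim_qPolar_general Q W

/-- Dimension identities for `Q`-polars:
(i) if `dim X/V < ∞` then `dim(V^𝔔/ker 𝔔) = dim(X/V^{𝔔𝔔})`;
(ii) if `dim W < ∞` then `dim(X/W^𝔔) = dim((W + ker 𝔔)/ker 𝔔)`. -/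
theorem dim_qPolar
    (Q : X →ₗ⋆[ℂ] X →ₗ[ℂ] ℂ)
    (hQ : ∀ x y, (starRingEnd ℂ) (Q x y) = Q y x) :
    (∀ V : Submodule ℂ X, Module.Finite ℂ (X ⧸ V) →
      Module.finrank ℂ ↥((qPolar Q V).map (qKer Q).mkQ)
        = Module.finrank ℂ (X ⧸ qPolar Q (qPolar Q V)))
    ∧ (∀ W : Submodule ℂ X, FiniteDimensional ℂ W →
      Module.finrank ℂ (X ⧸ qPolar Q W)
        = Module.finrank ℂ ↥(W.map (qKer Q).mkQ)) :=
  ⟨fun V _ => congrArg ENat.toNat (toENat_rank_quotient_qPolar Q hQ (qPolar Q V)).symm,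
    fun W _ => congrArg ENat.toNat (toENat_rank_quotient_qPolar Q hQ W)⟩
end
end

section
/- Let Λ_s and Λ_e be Lagrangian subspaces of (ℂ^{2n}, ω) with n replaced by the half-dimension, i.e. Lagrangian subspaces of the complex symplectic space (ℂ^{2n}, ω) built from ℂ^n⊕ℂ^n. Then i(Gr(I_{2n}), Λ_s⊕Λ_e, Λ_D) = n − dim(Λ_s ∩ Λ^n_D) + i(Λ_s, Λ_e, Λ^n_D), where the left-hand triple index is computed in (ℂ^{2n}⊕ℂ^{2n}, −ω⊕ω) and the right-hand one in (ℂ^{2n}, ω). -/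
open Matrix Module Submodule

noncomputable section

/-- `ℂ^{2n}`, indexed by `Fin n ⊕ Fin n` (the two `n`-blocks). -/
abbrev CV (n : ℕ) := (Fin n ⊕ Fin n) → ℂ

/-- The standard Hermitian inner product `⟨x,y⟩ = ∑ xᵢ conj(yᵢ)`. -/
def herm {m : Type*} [Fintype m] (x y : m → ℂ) : ℂ :=
  ∑ i, x i * (starRingEnd ℂ) (y i)

/-- The standard complex symplectic form `ω(x,y) = ⟨Jx, y⟩` on `ℂ^{2n}`,
where `J = [[0,-I],[I,0]]`. -/
def symForm (n : ℕ) (x y : CV n) : ℂ :=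
  herm ((Matrix.J (Fin n) ℂ).mulVec x) y

/-- The symplectic form `-ω ⊕ ω` on `ℂ^{2n} ⊕ ℂ^{2n}`. -/
def symForm2 (n : ℕ) (p q : CV n × CV n) : ℂ :=
  - symForm n p.1 q.1 + symForm n p.2 q.2

/-- A Lagrangian subspace of a complex symplectic space: `ω` vanishes on it and
it has (half) dimension `m`. -/
def IsLagrangian {X : Type*} [AddCommGroup X] [Module ℂ X]
    (w : X → X → ℂ) (m : ℕ) (Λ : Submodule ℂ X) : Prop :=
  (∀ x ∈ Λ, ∀ y ∈ Λ, w x y = 0) ∧ Module.finrank ℂ Λ = m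

/-- `m⁺(𝔔(α,β;κ))`: the dimension of a maximal subspace of `α ∩ (β + κ)` on which
the form `𝔔(x₁,x₂) = ω(y₁,z₂)` (with `x_j = y_j + z_j`, `y_j ∈ β`, `z_j ∈ κ`) is
positive definite. -/
def posInd {X : Type*} [AddCommGroup X] [Module ℂ X]
    (w : X → X → ℂ) (α β κ : Submodule ℂ X) : ℕ :=
  sSup {k : ℕ | ∃ P : Submodule ℂ X, P ≤ α ⊓ (β ⊔ κ) ∧
    (∀ x ∈ P, x ≠ 0 → ∀ y ∈ β, ∀ z ∈ κ, x = y + z → 0 < (w y z).re) ∧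
    k = Module.finrank ℂ P}

/-- The triple index `i(α,β,κ) = m⁺(𝔔(α,β;κ)) + dim(α∩κ) − dim(α∩β∩κ)`. -/
def tripleIdx {X : Type*} [AddCommGroup X] [Module ℂ X]
    (w : X → X → ℂ) (α β κ : Submodule ℂ X) : ℕ :=
  posInd w α β κ + Module.finrank ℂ ↥(α ⊓ κ) - Module.finrank ℂ ↥(α ⊓ β ⊓ κ)

/-- `Λ^n_D = ℂ^n ⊕ {0}`, the Dirichlet Lagrangian (second block vanishes). -/
def LnD (n : ℕ) : Submodule ℂ (CV n) :=
  LinearMap.ker (LinearMap.funLeft ℂ ℂ (Sum.inr : Fin n → Fin n ⊕ Fin n))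

/-- `Λ^n_N = {0} ⊕ ℂ^n`, the Neumann Lagrangian (first block vanishes). -/
def LnN (n : ℕ) : Submodule ℂ (CV n) :=
  LinearMap.ker (LinearMap.funLeft ℂ ℂ (Sum.inl : Fin n → Fin n ⊕ Fin n))

/-- `Λ_D = Λ^n_D ⊕ Λ^n_D ⊂ ℂ^{4n}`. -/
def LD (n : ℕ) : Submodule ℂ (CV n × CV n) := (LnD n).prod (LnD n)

/-- `Λ_N = Λ^n_N ⊕ Λ^n_N ⊂ ℂ^{4n}`. -/
def LN (n : ℕ) : Submodule ℂ (CV n × CV n) := (LnN n).prod (LnN n)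

/-!
Let `A` and `K` be isotropic. A vector of the diagonal decomposes along `(A ⊕ B) + (K ⊕ K)` as
`(x, x) = (a, b) + (k₁, k₂)`, that is, `x = a + k₁ = b + k₂`. Then `a = b + (k₂ - k₁)`, and since
`K` is isotropic, `-ω(a, k₁) + ω(b, k₂) = ω(b, k₂ - k₁)`, which is the value at `a` of
`𝔔(A, B; K)`. Hence choosing `a` linearly in `x` carries positive subspaces for
`(Gr(I), A ⊕ B, K ⊕ K)` to positive subspaces for `(A, B, K)`. Conversely, if `x ∈ A ∩ (B + K)`,
then `k₁ = x - a ∈ A`, so `ω(a, k₁) = 0` and the diagonal embedding carries positive subspaces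
back. Thus the two positive indices agree, and only the dimensions of the intersections differ.
-/

section Submodule

variable {R M P : Type*} [Ring R] [AddCommGroup M] [Module R M] [AddCommGroup P] [Module R P]

lemma exists_linearMap_sub_mem_of_forall_mem_sup [Projective R P] {A K : Submodule R M}
    (f : P →ₗ[R] M) (hf : ∀ p, f p ∈ A ⊔ K) : ∃ g : P →ₗ[R] A, ∀ p, f p - g p ∈ K := by
  let q : A →ₗ[R] M ⧸ K := K.mkQ ∘ₗ A.subtype
  have hq : ∀ p, (K.mkQ ∘ₗ f) p ∈ LinearMap.range q := fun p ↦ by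
    obtain ⟨a, ha, k, hk, hak⟩ := mem_sup.mp (hf p)
    refine ⟨⟨a, ha⟩, (Submodule.Quotient.eq K).mpr ?_⟩
    rw [← hak]
    simpa using hk
  obtain ⟨g, hg⟩ := projective_lifting_property q.rangeRestrict
    ((K.mkQ ∘ₗ f).codRestrict (LinearMap.range q) hq) q.surjective_rangeRestrict
  refine ⟨g, fun p ↦ (Submodule.Quotient.eq K).mp ?_⟩
  exact (congrArg Subtype.val (LinearMap.congr_fun hg p)).symm

lemma graph_id_inf_prod (A B : Submodule R M) :
    LinearMap.graph (LinearMap.id : M →ₗ[R] M) ⊓ A.prod B =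
      (A ⊓ B).map (LinearMap.id.prod LinearMap.id) := by
  ext ⟨x, y⟩
  simp only [mem_inf, LinearMap.mem_graph_iff, mem_prod, mem_map, LinearMap.prod_apply,
    LinearMap.id_apply, Function.prod, Prod.mk.injEq]
  constructor
  · rintro ⟨rfl, h⟩
    exact ⟨_, h, rfl, rfl⟩
  · rintro ⟨z, h, rfl, rfl⟩
    exact ⟨rfl, h⟩

lemma finrank_map_id_prod_id (A : Submodule R M) :
    finrank R (A.map (LinearMap.id.prod LinearMap.id : M →ₗ[R] M × M)) = finrank R A :=
  (equivMapOfInjective _ (fun _ _ h ↦ congrArg Prod.fst h) A).finrank_eq.symm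

end Submodule

section PositiveSubspace

variable {X Y : Type*} [AddCommGroup X] [Module ℂ X] [AddCommGroup Y] [Module ℂ Y]

/-- `P` is a subspace of `α ∩ (β + κ)` on which the form `𝔔(α,β;κ)` is positive definite: an
admissible subspace in the definition of `posInd`. As there, positivity is required for every
decomposition `x = y + z` rather than for a chosen one. -/
def IsPositiveSubspace (w : X → X → ℂ) (α β κ P : Submodule ℂ X) : Prop :=
  P ≤ α ⊓ (β ⊔ κ) ∧
    ∀ x ∈ P, x ≠ 0 → ∀ y ∈ β, ∀ z ∈ κ, x = y + z → 0 < (w y z).re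

lemma posInd_congr {w : X → X → ℂ} {v : Y → Y → ℂ} {α β κ : Submodule ℂ X}
    {α' β' κ' : Submodule ℂ Y}
    (h : ∀ P, IsPositiveSubspace w α β κ P →
      ∃ Q, IsPositiveSubspace v α' β' κ' Q ∧ finrank ℂ Q = finrank ℂ P)
    (h' : ∀ Q, IsPositiveSubspace v α' β' κ' Q →
      ∃ P, IsPositiveSubspace w α β κ P ∧ finrank ℂ P = finrank ℂ Q) :
    posInd w α β κ = posInd v α' β' κ' := by
  refine congrArg sSup (Set.ext fun k ↦ ⟨?_, ?_⟩)
  · rintro ⟨P, hP, hpos, rfl⟩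
    obtain ⟨Q, hQ, hrank⟩ := h P ⟨hP, hpos⟩
    exact ⟨Q, hQ.1, hQ.2, hrank.symm⟩
  · rintro ⟨Q, hQ, hpos, rfl⟩
    obtain ⟨P, hP, hrank⟩ := h' Q ⟨hQ, hpos⟩
    exact ⟨P, hP.1, hP.2, hrank.symm⟩

-- Positivity forces `f` to be injective: if `f p = 0`, then `𝔔` vanishes at `p`.
lemma IsPositiveSubspace.exists_finrank_eq {w : X → X → ℂ} {v : Y → Y → ℂ}
    {α β κ P : Submodule ℂ X} {α' β' κ' : Submodule ℂ Y} (hP : IsPositiveSubspace w α β κ P)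
    (hv : v 0 0 = 0) (f : P →ₗ[ℂ] Y) (hf : ∀ p, f p ∈ α' ⊓ (β' ⊔ κ'))
    (hform : ∀ p, ∀ y' ∈ β', ∀ z' ∈ κ', f p = y' + z' →
      ∃ y ∈ β, ∃ z ∈ κ, (p : X) = y + z ∧ w y z = v y' z') :
    ∃ Q, IsPositiveSubspace v α' β' κ' Q ∧ finrank ℂ Q = finrank ℂ P := by
  have hpos : ∀ p, p ≠ 0 → ∀ y' ∈ β', ∀ z' ∈ κ', f p = y' + z' → 0 < (v y' z').re := by
    intro p hp y' hy' z' hz' hdec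
    obtain ⟨y, hy, z, hz, hyz, hwv⟩ := hform p y' hy' z' hz' hdec
    exact hwv ▸ hP.2 p p.2 (by simpa using hp) y hy z hz hyz
  have hinj : Function.Injective f := by
    refine (injective_iff_map_eq_zero f).mpr fun p hp ↦ of_not_not fun hne ↦ ?_
    have := hpos p hne 0 β'.zero_mem 0 κ'.zero_mem (by simpa using hp)
    simp [hv] at this
  refine ⟨LinearMap.range f, ⟨?_, ?_⟩, LinearMap.finrank_range_of_inj hinj⟩
  · rintro _ ⟨p, rfl⟩
    exact hf p
  · rintro _ ⟨p, rfl⟩ hne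
    exact hpos p fun h ↦ hne (by simp [h])

end PositiveSubspace

section Separated

variable {X : Type*} [AddCommGroup X] [Module ℂ X]

/-- The subspace `Λ` is isotropic for the form `w`: the form vanishes identically on it. -/
def IsIsotropic (w : X → X → ℂ) (Λ : Submodule ℂ X) : Prop :=
  ∀ x ∈ Λ, ∀ y ∈ Λ, w x y = 0

/-- The form `-w ⊕ w` on `X ⊕ X`; `symForm2 n` is the case `w = symForm n`. -/
def negProdForm (w : X → X → ℂ) (p q : X × X) : ℂ :=
  -w p.1 q.1 + w p.2 q.2

variable {ω : X →+ X →+ ℂ} {A B K : Submodule ℂ X}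

lemma IsPositiveSubspace.exists_of_graph_id {P : Submodule ℂ (X × X)} (hK : IsIsotropic (ω · ·) K)
    (hP : IsPositiveSubspace (negProdForm (ω · ·)) (LinearMap.graph (LinearMap.id : X →ₗ[ℂ] X))
      (A.prod B) (K.prod K) P) :
    ∃ Q, IsPositiveSubspace (ω · ·) A B K Q ∧ finrank ℂ Q = finrank ℂ P := by
  have hdiag : ∀ p : P, ∃ x ∈ (A ⊔ K) ⊓ (B ⊔ K), (x, x) = p.1 := fun p ↦ by
    have := hP.1 p.2
    rwa [prod_sup_prod, graph_id_inf_prod] at this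
  obtain ⟨a, ha⟩ := exists_linearMap_sub_mem_of_forall_mem_sup (A := A) (K := K)
    (LinearMap.fst ℂ X X ∘ₗ P.subtype) fun p ↦ by
      obtain ⟨x, hx, hxp⟩ := hdiag p
      simpa [← hxp] using hx.1
  refine hP.exists_finrank_eq (by simp) (A.subtype ∘ₗ a) (fun p ↦ ⟨(a p).2, ?_⟩) ?_
  · obtain ⟨x, hx, hxp⟩ := hdiag p
    have hk : x - a p ∈ K := by simpa [← hxp] using ha p
    simpa using sub_mem hx.2 (mem_sup_right hk)
  · intro p b hb k hk hdec
    obtain ⟨x, -, hxp⟩ := hdiag p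
    have hl : x - a p ∈ K := by simpa [← hxp] using ha p
    replace hdec : (a p : X) = b + k := hdec
    refine ⟨(a p, b), ⟨(a p).2, hb⟩, (x - a p, k + (x - a p)), ⟨hl, add_mem hk hl⟩, ?_, ?_⟩
    · simp [← hxp, ← add_assoc, ← hdec]
    · have hkl : ω k (x - a p) = 0 := hK k hk _ hl
      calc -ω (a p) (x - a p) + ω b (k + (x - a p))
          = -ω (b + k) (x - a p) + ω b (k + (x - a p)) := by rw [← hdec]
        _ = -ω k (x - a p) + ω b k := by
          rw [map_add ω, AddMonoidHom.add_apply, map_add (ω b)]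
          ring
        _ = ω b k := by rw [hkl, neg_zero, zero_add]

lemma IsPositiveSubspace.exists_graph_id {P : Submodule ℂ X} (hA : IsIsotropic (ω · ·) A)
    (hP : IsPositiveSubspace (ω · ·) A B K P) :
    ∃ Q, IsPositiveSubspace (negProdForm (ω · ·)) (LinearMap.graph (LinearMap.id : X →ₗ[ℂ] X))
      (A.prod B) (K.prod K) Q ∧ finrank ℂ Q = finrank ℂ P := by
  refine hP.exists_finrank_eq (by simp [negProdForm])
    (LinearMap.id.prod LinearMap.id ∘ₗ P.subtype) (fun p ↦ ?_) ?_
  · rw [prod_sup_prod, graph_id_inf_prod]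
    have hp := hP.1 p.2
    exact mem_map_of_mem ⟨mem_sup_left hp.1, hp.2⟩
  · rintro p ⟨a, b⟩ ⟨ha, hb⟩ ⟨k₁, k₂⟩ ⟨-, hk₂⟩ hdec
    have hfst : (p : X) = a + k₁ := congrArg Prod.fst hdec
    have hsnd : (p : X) = b + k₂ := congrArg Prod.snd hdec
    have hk₁ : k₁ ∈ A := (add_mem_cancel_left ha).mp (hfst ▸ (hP.1 p.2).1)
    have hak : ω a k₁ = 0 := hA a ha k₁ hk₁
    exact ⟨b, hb, k₂, hk₂, hsnd, by simp [negProdForm, hak]⟩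

theorem posInd_graph_id_separated (hA : IsIsotropic (ω · ·) A) (hK : IsIsotropic (ω · ·) K) :
    posInd (negProdForm (ω · ·)) (LinearMap.graph (LinearMap.id : X →ₗ[ℂ] X))
      (A.prod B) (K.prod K) = posInd (ω · ·) A B K :=
  posInd_congr (fun _ hP ↦ hP.exists_of_graph_id hK) (fun _ hP ↦ hP.exists_graph_id hA)

theorem tripleIdx_graph_id_separated_general (B : Submodule ℂ X) [FiniteDimensional ℂ K]
    (hA : IsIsotropic (ω · ·) A) (hK : IsIsotropic (ω · ·) K) :
    tripleIdx (negProdForm (ω · ·)) (LinearMap.graph (LinearMap.id : X →ₗ[ℂ] X))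
      (A.prod B) (K.prod K) =
        finrank ℂ K - finrank ℂ ↥(A ⊓ K) + tripleIdx (ω · ·) A B K := by
  have hAK : finrank ℂ ↥(A ⊓ K) ≤ finrank ℂ K := finrank_mono inf_le_right
  have : FiniteDimensional ℂ ↥(A ⊓ K) := finiteDimensional_of_le inf_le_right
  have hABK : finrank ℂ ↥(A ⊓ B ⊓ K) ≤ finrank ℂ ↥(A ⊓ K) :=
    finrank_mono (inf_le_inf_right K inf_le_left)
  unfold tripleIdx
  rw [posInd_graph_id_separated hA hK, inf_assoc, prod_inf_prod, graph_id_inf_prod,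
    graph_id_inf_prod, finrank_map_id_prod_id, finrank_map_id_prod_id, inf_idem,
    ← inf_inf_distrib_right]
  omega

end Separated

section Standard

variable (n : ℕ)

lemma symForm_eq_dotProduct (x y : CV n) : symForm n x y = (J (Fin n) ℂ *ᵥ x) ⬝ᵥ star y :=
  rfl

lemma symForm_add_left (x x' y : CV n) : symForm n (x + x') y = symForm n x y + symForm n x' y := by
  simp only [symForm_eq_dotProduct, mulVec_add, add_dotProduct]

lemma symForm_add_right (x y y' : CV n) :
    symForm n x (y + y') = symForm n x y + symForm n x y' := by
  simp only [symForm_eq_dotProduct, star_add, dotProduct_add]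

/-- The standard form `symForm n` bundled as a biadditive map. -/
def symFormHom : CV n →+ CV n →+ ℂ :=
  AddMonoidHom.mk' (fun x ↦ AddMonoidHom.mk' (symForm n x) (symForm_add_right n x))
    fun x x' ↦ AddMonoidHom.ext (symForm_add_left n x x')

lemma finrank_LnD : finrank ℂ (LnD n) = n := by
  let snd : CV n →ₗ[ℂ] Fin n → ℂ := LinearMap.funLeft ℂ ℂ Sum.inr
  have hsnd : LinearMap.range snd = ⊤ := LinearMap.range_eq_top.mpr
    (LinearMap.funLeft_surjective_of_injective ℂ ℂ _ Sum.inr_injective)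
  have hrank : finrank ℂ (LinearMap.range snd) + finrank ℂ (LnD n) = finrank ℂ (CV n) :=
    snd.finrank_range_add_finrank_ker
  rw [hsnd] at hrank
  simpa using hrank

lemma isIsotropic_LnD : IsIsotropic (symForm n) (LnD n) := by
  intro x hx y hy
  have hx' : ∀ i, x (Sum.inr i) = 0 := congrFun hx
  have hy' : ∀ i, y (Sum.inr i) = 0 := congrFun hy
  simp [symForm, herm, J, fromBlocks_mulVec, neg_mulVec, Function.comp_def, hx', hy']

end Standard

/-- For separated boundary conditions:
`i(Gr(I_{2n}), Λ_s⊕Λ_e, Λ_D) = n − dim(Λ_s ∩ Λ^n_D) + i(Λ_s, Λ_e, Λ^n_D)`. -/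
theorem tripleIdx_graph_id_separated (n : ℕ)
    (Λs Λe : Submodule ℂ (CV n))
    (hs : IsLagrangian (symForm n) n Λs)
    (he : IsLagrangian (symForm n) n Λe) :
    tripleIdx (symForm2 n)
      (LinearMap.graph (LinearMap.id : CV n →ₗ[ℂ] CV n))
      (Λs.prod Λe) (LD n)
    = n - Module.finrank ℂ ↥(Λs ⊓ LnD n)
      + tripleIdx (symForm n) Λs Λe (LnD n) := by
  have h := tripleIdx_graph_id_separated_general (ω := symFormHom n) Λe hs.1 (isIsotropic_LnD n)
  rwa [finrank_LnD] at h
end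
end
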